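/- arXiv:1605.08635 — 2 statements merged into one kernel-verified Lean document; each statement's English description precedes it below -/
import Mathlib

section
/- Let (Ω_i, 𝒜_i, μ_i), i = 1,…,n, be probability spaces and μ = ⊗_{i=1}^n μ_i their product. Let f be a bounded measurable function with Hoeffding decomposition f = f_1 + Σ_{k=2}^n f_k = f_1 + Rf (in particular ∫ f dμ = 0). Suppose |𝔡 f_1| ≤ b_0 pointwise for some b_0 ≥ 0, |𝔡|𝔡 Rf|| ≤ 1 pointwise, and ∫ ‖𝔇^{(2)} f‖_{HS}² dμ ≤ b² for some b ≥ 0. Then ∫ exp(|f| / (12 + 4b² + 7b_0)) dμ ≤ 2. -/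
/-!
Entropy proof of second order concentration on product spaces.

The operator `𝔡` satisfies the modified logarithmic Sobolev inequality
`Ent (exp g) ≤ ∫ |𝔡g|² exp g` (`mLSI`): in one dimension this is `Ent (exp φ) ≤ Cov (φ, exp φ)`
together with the trapezoidal bound for `exp`, and entropy tensorizes by successively averaging out
the coordinates. The Herbst argument (`herbst`) turns it into two bounds for centered `g`:
`|𝔡g|² ≤ H` implies `∫ exp g ≤ exp H`, and `∫ exp (2 |𝔡g|²) ≤ exp H` implies `∫ exp g ≤ exp H`.

The first bound handles the first order term, scaled by `2 / (7 b₀)`, as `exp (4 / 49) ≤ 2`.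
For the remainder `u = Rf`, the function `g = |𝔡u|` satisfies `|𝔡g| ≤ 1` and is therefore
sub-Gaussian around its mean, so `∫ exp ((g - ∫ g)² / 9) ≤ √(9/5)` by Gaussian linearization
(`integral_exp_sq_le`). By orthogonality of the Hoeffding kernels,
`(∫ g)² ≤ ∫ g² = ∑ d ‖f_d‖² ≤ ∑ d (d - 1) ‖f_d‖² = ∫ ‖𝔇⁽²⁾f‖² ≤ b²`, the sums running over `2 ≤ d`.
With the scaling `2 / (12 + 4 b²)` this gives `∫ exp (2 |𝔡 ·|²) ≤ exp (1/12) √(9/5) ≤ 2`, and the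
second bound applies. The two parts are put together by convexity of `exp`.
-/

open MeasureTheory

variable {n : ℕ} {Ω : Fin n → Type*} [∀ i, MeasurableSpace (Ω i)]

/-- The coordinatewise L²-difference operator `𝔡ᵢ`. -/
noncomputable def dd (μ : ∀ i, Measure (Ω i)) (f : (∀ i, Ω i) → ℝ) (i : Fin n)
    (x : ∀ i, Ω i) : ℝ :=
  Real.sqrt ((1 / 2) * ∫ y, (f x - f (Function.update x i y)) ^ 2 ∂(μ i))

/-- The Euclidean norm `|𝔡f(x)|`. -/
noncomputable def ddNorm (μ : ∀ i, Measure (Ω i)) (f : (∀ i, Ω i) → ℝ)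
    (x : ∀ i, Ω i) : ℝ :=
  Real.sqrt (∑ i, dd μ f i x ^ 2)

/-- The difference operator `𝔇ᵢ f(x) = f(x) − ∫ f(x₁,…,yᵢ,…,xₙ) μᵢ(dyᵢ)`. -/
noncomputable def DD (μ : ∀ i, Measure (Ω i)) (f : (∀ i, Ω i) → ℝ) (i : Fin n)
    (x : ∀ i, Ω i) : ℝ :=
  f x - ∫ y, f (Function.update x i y) ∂(μ i)

/-- The squared Hilbert–Schmidt norm `‖𝔇⁽²⁾f(x)‖²_HS` of the de-diagonalized Hessian,
whose `(i,j)` entry is `𝔇ᵢⱼ f(x)` for `i ≠ j` and `0` on the diagonal. -/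
noncomputable def D2HSsq (μ : ∀ i, Measure (Ω i)) (f : (∀ i, Ω i) → ℝ)
    (x : ∀ i, Ω i) : ℝ :=
  ∑ i, ∑ j, if i = j then 0 else DD μ (DD μ f j) i x ^ 2

/-- `h` is a family of Hoeffding kernels: `h S` depends only on the coordinates in `S`,
is integrable in each coordinate, and integrates to zero in each of its own variables. -/
structure IsHoeffdingKernels (μ : ∀ i, Measure (Ω i))
    (h : Finset (Fin n) → (∀ i, Ω i) → ℝ) : Prop where
  meas : ∀ S, Measurable (h S)
  localized : ∀ S, ∀ x y : ∀ i, Ω i, (∀ i ∈ S, x i = y i) → h S x = h S y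
  integrable : ∀ S, ∀ i : Fin n, ∀ x : ∀ i, Ω i,
    Integrable (fun y => h S (Function.update x i y)) (μ i)
  degenerate : ∀ S, ∀ i ∈ S, ∀ x : ∀ i, Ω i,
    (∫ y, h S (Function.update x i y) ∂(μ i)) = 0

set_option linter.unusedSectionVars false

/-! ### Bounded measurable functions -/

/-- Bounded measurable real functions; all functions in the argument belong to this class, so
that integrability is never an issue. -/
def BddMeas {α : Type*} [MeasurableSpace α] (g : α → ℝ) : Prop :=
  Measurable g ∧ ∃ C, ∀ x, |g x| ≤ C

namespace BddMeas

variable {α β : Type*} [MeasurableSpace α] [MeasurableSpace β] {f g : α → ℝ}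

lemma const (c : ℝ) : BddMeas (fun _ : α => c) := ⟨measurable_const, |c|, fun _ => le_rfl⟩

lemma add (hf : BddMeas f) (hg : BddMeas g) : BddMeas (fun x => f x + g x) := by
  obtain ⟨hf, C, hC⟩ := hf
  obtain ⟨hg, D, hD⟩ := hg
  exact ⟨hf.add hg, C + D, fun x => (abs_add_le _ _).trans (add_le_add (hC x) (hD x))⟩

lemma neg (hf : BddMeas f) : BddMeas (fun x => -f x) := by
  obtain ⟨hf, C, hC⟩ := hf
  exact ⟨hf.neg, C, fun x => by rw [abs_neg]; exact hC x⟩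

lemma sub (hf : BddMeas f) (hg : BddMeas g) : BddMeas (fun x => f x - g x) := by
  simpa only [sub_eq_add_neg] using hf.add hg.neg

lemma mul (hf : BddMeas f) (hg : BddMeas g) : BddMeas (fun x => f x * g x) := by
  obtain ⟨hf, C, hC⟩ := hf
  obtain ⟨hg, D, hD⟩ := hg
  refine ⟨hf.mul hg, C * D, fun x => ?_⟩
  rw [abs_mul]
  exact mul_le_mul (hC x) (hD x) (abs_nonneg _) ((abs_nonneg _).trans (hC x))

lemma pow_two (hf : BddMeas f) : BddMeas (fun x => f x ^ 2) := by
  simpa only [sq] using hf.mul hf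

lemma exp (hf : BddMeas f) : BddMeas (fun x => Real.exp (f x)) := by
  obtain ⟨hf, C, hC⟩ := hf
  refine ⟨hf.exp, Real.exp C, fun x => ?_⟩
  rw [Real.abs_exp]
  exact Real.exp_le_exp.2 ((le_abs_self _).trans (hC x))

lemma abs (hf : BddMeas f) : BddMeas (fun x => |f x|) := by
  obtain ⟨hf, C, hC⟩ := hf
  exact ⟨hf.abs, C, fun x => by rw [abs_abs]; exact hC x⟩

lemma sqrt (hf : BddMeas f) : BddMeas (fun x => Real.sqrt (f x)) := by
  obtain ⟨hf, C, hC⟩ := hf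
  refine ⟨hf.sqrt, Real.sqrt C, fun x => ?_⟩
  rw [abs_of_nonneg (Real.sqrt_nonneg _)]
  exact Real.sqrt_le_sqrt ((le_abs_self _).trans (hC x))

lemma log (hf : BddMeas f) {c : ℝ} (hc : 0 < c) (hcf : ∀ x, c ≤ f x) :
    BddMeas (fun x => Real.log (f x)) := by
  obtain ⟨hf, C, hC⟩ := hf
  refine ⟨hf.log, max (|Real.log c|) (|Real.log C|), fun x => ?_⟩
  exact abs_le_max_abs_abs (Real.log_le_log hc (hcf x))
    (Real.log_le_log (hc.trans_le (hcf x)) ((le_abs_self _).trans (hC x)))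

lemma sum {ι : Type*} (s : Finset ι) {F : ι → α → ℝ} (hF : ∀ i ∈ s, BddMeas (F i)) :
    BddMeas (fun x => ∑ i ∈ s, F i x) := by
  classical
  induction s using Finset.induction_on with
  | empty => simpa using const (α := α) 0
  | insert a s ha ih =>
    simp only [Finset.sum_insert ha]
    exact (hF a (Finset.mem_insert_self a s)).add
      (ih fun i hi => hF i (Finset.mem_insert_of_mem hi))

lemma comp (hf : BddMeas f) {φ : β → α} (hφ : Measurable φ) : BddMeas (fun x => f (φ x)) := by
  obtain ⟨hf, C, hC⟩ := hf
  exact ⟨hf.comp hφ, C, fun x => hC _⟩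

lemma int (hf : BddMeas f) (P : Measure α) [IsFiniteMeasure P] : Integrable f P := by
  obtain ⟨hf, C, hC⟩ := hf
  exact Integrable.of_bound hf.aestronglyMeasurable C (Filter.Eventually.of_forall hC)

lemma integral_right {F : α × β → ℝ} (hF : BddMeas F) (P : Measure β) [IsProbabilityMeasure P] :
    BddMeas (fun x => ∫ y, F (x, y) ∂P) := by
  obtain ⟨hF, C, hC⟩ := hF
  refine ⟨hF.stronglyMeasurable.integral_prod_right'.measurable, C, fun x => ?_⟩
  have := norm_integral_le_of_norm_le_const (μ := P) (f := fun y => F (x, y)) (C := C)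
    (Filter.Eventually.of_forall fun y => hC (x, y))
  simpa using this

end BddMeas

/-! ### Averaging over one coordinate -/

lemma measurable_upd (i : Fin n) :
    Measurable (fun p : (∀ i, Ω i) × Ω i => Function.update p.1 i p.2) := by
  refine measurable_pi_lambda _ fun j => ?_
  by_cases hj : j = i
  · subst hj
    simpa using measurable_snd
  · simp only [Function.update_of_ne hj]
    exact (measurable_pi_apply j).comp measurable_fst

lemma measurable_upd_right (i : Fin n) (x : ∀ i, Ω i) :
    Measurable (fun y : Ω i => Function.update x i y) :=
  (measurable_upd i).comp measurable_prodMk_left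

/-- Resampling one coordinate preserves the product measure. -/
lemma measurePreserving_upd (μ : ∀ i, Measure (Ω i)) [∀ i, IsProbabilityMeasure (μ i)]
    (i : Fin n) :
    MeasurePreserving (fun p : (∀ i, Ω i) × Ω i => Function.update p.1 i p.2)
      ((Measure.pi μ).prod (μ i)) (Measure.pi μ) := by
  refine ⟨measurable_upd i, ?_⟩
  symm
  refine Measure.pi_eq fun s hs => ?_
  rw [Measure.map_apply (measurable_upd i) (MeasurableSet.univ_pi hs)]
  have hpre : (fun p : (∀ i, Ω i) × Ω i => Function.update p.1 i p.2) ⁻¹' Set.univ.pi s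
      = (Set.univ.pi (Function.update s i Set.univ)) ×ˢ s i := by
    ext ⟨x, y⟩
    simp only [Set.mem_preimage, Set.mem_pi, Set.mem_univ, true_imp_iff, Set.mem_prod]
    constructor
    · intro H
      refine ⟨fun j => ?_, by simpa using H i⟩
      by_cases hj : j = i
      · subst hj; simp
      · simpa [hj] using H j
    · rintro ⟨H, hy⟩ j
      by_cases hj : j = i
      · subst hj; simpa using hy
      · simpa [hj] using H j
  rw [hpre, Measure.prod_prod, Measure.pi_pi, ← Finset.prod_erase_mul _ _ (Finset.mem_univ i),
    ← Finset.prod_erase_mul (s := Finset.univ) (f := fun j => μ j (s j)) (Finset.mem_univ i)]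
  congr 1
  rw [Function.update_self, measure_univ, mul_one]
  refine Finset.prod_congr rfl fun j hj => ?_
  rw [Function.update_of_ne (Finset.ne_of_mem_erase hj)]

/-- The average `∫ g(x₁,…,yᵢ,…,xₙ) μᵢ(dyᵢ)` of `g` over its `i`-th coordinate. -/
noncomputable def avg (μ : ∀ i, Measure (Ω i)) (i : Fin n) (g : (∀ i, Ω i) → ℝ)
    (x : ∀ i, Ω i) : ℝ :=
  ∫ y, g (Function.update x i y) ∂(μ i)

section avg

variable (μ : ∀ i, Measure (Ω i)) [∀ i, IsProbabilityMeasure (μ i)]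

lemma BddMeas.avg {g : (∀ i, Ω i) → ℝ} (hg : BddMeas g) (i : Fin n) : BddMeas (avg μ i g) :=
  (hg.comp (measurable_upd i)).integral_right (μ i)

lemma integral_avg {g : (∀ i, Ω i) → ℝ} (hg : BddMeas g) (i : Fin n) :
    ∫ x, avg μ i g x ∂(Measure.pi μ) = ∫ x, g x ∂(Measure.pi μ) := by
  have hmp := measurePreserving_upd μ i
  have h1 := integral_prod _ ((hg.comp (measurable_upd i)).int ((Measure.pi μ).prod (μ i)))
  rw [← hmp.map_eq, integral_map hmp.measurable.aemeasurable hg.1.aestronglyMeasurable, h1,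
    hmp.map_eq]
  rfl

lemma avg_update (g : (∀ i, Ω i) → ℝ) (i : Fin n) (x : ∀ i, Ω i) (y : Ω i) :
    avg μ i g (Function.update x i y) = avg μ i g x := by
  simp [avg]

lemma avg_update_of_indep {g : (∀ i, Ω i) → ℝ} {i j : Fin n}
    (hg : ∀ x y, g (Function.update x j y) = g x) (x : ∀ i, Ω i) (y : Ω j) :
    avg μ i g (Function.update x j y) = avg μ i g x := by
  by_cases hij : j = i
  · subst hij; exact avg_update μ g j x y
  · simp only [avg]
    refine integral_congr_ae (Filter.Eventually.of_forall fun z => ?_)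
    simp only [Function.update_comm hij, hg]

lemma BddMeas.dd_sq {g : (∀ i, Ω i) → ℝ} (hg : BddMeas g) (i : Fin n) :
    BddMeas (fun x => dd μ g i x ^ 2) ∧
      ∀ x, dd μ g i x ^ 2 = (1 / 2) * ∫ y, (g x - g (Function.update x i y)) ^ 2 ∂(μ i) := by
  have h1 : ∀ x, dd μ g i x ^ 2
      = (1 / 2) * ∫ y, (g x - g (Function.update x i y)) ^ 2 ∂(μ i) := fun x =>
    Real.sq_sqrt (mul_nonneg (by norm_num) (integral_nonneg fun y => sq_nonneg _))
  refine ⟨?_, h1⟩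
  simp only [h1]
  exact (BddMeas.const _).mul
    (((hg.comp measurable_fst).sub (hg.comp (measurable_upd i))).pow_two.integral_right (μ i))

lemma ddNorm_sq (g : (∀ i, Ω i) → ℝ) (x : ∀ i, Ω i) :
    ddNorm μ g x ^ 2 = ∑ i, dd μ g i x ^ 2 :=
  Real.sq_sqrt (Finset.sum_nonneg fun _ _ => sq_nonneg _)

lemma BddMeas.ddNorm {g : (∀ i, Ω i) → ℝ} (hg : BddMeas g) : BddMeas (ddNorm μ g) :=
  (BddMeas.sum _ fun i _ => (hg.dd_sq μ i).1).sqrt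

lemma ddNorm_sq_affine (g : (∀ i, Ω i) → ℝ) (t c : ℝ) (x : ∀ i, Ω i) :
    ddNorm μ (fun x => t * g x + c) x ^ 2 = t ^ 2 * ddNorm μ g x ^ 2 := by
  rw [ddNorm_sq, ddNorm_sq, Finset.mul_sum]
  refine Finset.sum_congr rfl fun i _ => ?_
  have key : ∀ g : (∀ i, Ω i) → ℝ, dd μ g i x ^ 2
      = (1 / 2) * ∫ y, (g x - g (Function.update x i y)) ^ 2 ∂(μ i) := fun g =>
    Real.sq_sqrt (mul_nonneg (by norm_num) (integral_nonneg fun y => sq_nonneg _))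
  rw [key, key]
  have : ∀ y, (t * g x + c - (t * g (Function.update x i y) + c)) ^ 2
      = t ^ 2 * (g x - g (Function.update x i y)) ^ 2 := fun y => by ring
  simp only [this]
  rw [integral_const_mul]
  ring

end avg

/-- A function that does not depend on any single coordinate is constant. -/
lemma eq_of_indep {g : (∀ i, Ω i) → ℝ} (hg : ∀ i x y, g (Function.update x i y) = g x)
    (x y : ∀ i, Ω i) : g x = g y := by
  have : ∀ S : Finset (Fin n), g (S.piecewise y x) = g x := by
    intro S
    induction S using Finset.induction_on with
    | empty => simp
    | insert a s ha ih => rw [Finset.piecewise_insert, hg, ih]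
  simpa using (this Finset.univ).symm

/-! ### The modified logarithmic Sobolev inequality -/

lemma sinh_le_mul_cosh {t : ℝ} (ht : 0 ≤ t) : Real.sinh t ≤ t * Real.cosh t := by
  have hmono : MonotoneOn (fun t : ℝ => t * Real.cosh t - Real.sinh t) (Set.Ici 0) := by
    have hd : ∀ s : ℝ, HasDerivAt (fun t : ℝ => t * Real.cosh t - Real.sinh t)
        (1 * Real.cosh s + s * Real.sinh s - Real.cosh s) s := fun s =>
      ((hasDerivAt_id s).mul (Real.hasDerivAt_cosh s)).sub (Real.hasDerivAt_sinh s)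
    refine monotoneOn_of_deriv_nonneg (convex_Ici 0)
      (fun s _ => (hd s).continuousAt.continuousWithinAt)
      (fun s _ => (hd s).differentiableAt.differentiableWithinAt) fun s hs => ?_
    rw [interior_Ici] at hs
    rw [(hd s).deriv]
    have h1 : 0 ≤ Real.sinh s := Real.sinh_nonneg_iff.2 (le_of_lt hs)
    have h2 := mul_nonneg (le_of_lt hs) h1
    linarith
  have := hmono (Set.mem_Ici.2 le_rfl) (Set.mem_Ici.2 ht) ht
  simp at this
  linarith

/-- The trapezoidal bound for the integral of the convex function `exp` between `b` and `a`. -/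
lemma mul_exp_sub_exp_le (a b : ℝ) :
    (a - b) * (Real.exp a - Real.exp b)
      ≤ (1 / 2) * ((a - b) ^ 2 * (Real.exp a + Real.exp b)) := by
  wlog hab : b ≤ a generalizing a b
  · have := this b a (le_of_not_ge hab)
    nlinarith
  have h1 : Real.exp a - Real.exp b ≤ (a - b) / 2 * (Real.exp a + Real.exp b) := by
    have h := sinh_le_mul_cosh (t := (a - b) / 2) (by linarith)
    rw [Real.sinh_eq, Real.cosh_eq] at h
    have ha : Real.exp a = Real.exp ((a + b) / 2) * Real.exp ((a - b) / 2) := by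
      rw [← Real.exp_add]; ring_nf
    have hb : Real.exp b = Real.exp ((a + b) / 2) * Real.exp (-((a - b) / 2)) := by
      rw [← Real.exp_add]; ring_nf
    rw [ha, hb]
    have := mul_le_mul_of_nonneg_left h (Real.exp_pos ((a + b) / 2)).le
    linarith
  have := mul_le_mul_of_nonneg_left h1 (sub_nonneg.2 hab)
  linarith

/-- One-dimensional modified logarithmic Sobolev inequality, in variational form: the entropy of
`exp φ` is at least `∫ exp φ * log (G / ∫ G)` for every positive `G`. -/
lemma one_dim_mLSI {α : Type*} [MeasurableSpace α] (ν : Measure α) [IsProbabilityMeasure ν]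
    {φ G : α → ℝ} (hφ : BddMeas φ) (hG : BddMeas G) {c : ℝ} (hc : 0 < c) (hcG : ∀ y, c ≤ G y) :
    ∫ y, Real.exp (φ y) * (Real.log (G y) - Real.log (∫ z, G z ∂ν)) ∂ν
      ≤ ∫ y, ((1 / 2) * ∫ z, (φ y - φ z) ^ 2 ∂ν) * Real.exp (φ y) ∂ν := by
  have hE := hφ.exp
  have hlG := hG.log hc hcG
  set M := ∫ y, Real.exp (φ y) ∂ν with hM
  set m := ∫ y, φ y ∂ν with hm
  set N := ∫ z, G z ∂ν with hN
  set p := ∫ y, φ y * Real.exp (φ y) ∂ν with hp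
  have hNpos : 0 < N := by
    have : ∫ _, c ∂ν ≤ N := integral_mono (integrable_const c) (hG.int ν) hcG
    simp at this
    linarith
  have hMpos : 0 < M := integral_exp_pos (hE.int ν)
  have hpi := (hφ.mul hE).int ν
  -- The Gibbs variational principle.
  have h1 : ∫ y, Real.exp (φ y) * (Real.log (G y) - Real.log N) ∂ν ≤ p - M * Real.log M := by
    have hle : ∫ y, Real.exp (φ y) * (Real.log (G y) - Real.log N) ∂ν
        ≤ ∫ y, (φ y * Real.exp (φ y) - Real.log M * Real.exp (φ y)
          + (M / N * G y - Real.exp (φ y))) ∂ν := by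
      refine integral_mono ((hE.mul (hlG.sub (BddMeas.const _))).int ν)
        ((((hφ.mul hE).sub ((BddMeas.const _).mul hE)).add
          (((BddMeas.const _).mul hG).sub hE)).int ν) fun y => ?_
      have hGy : 0 < G y := hc.trans_le (hcG y)
      have h := Real.add_one_le_exp (Real.log (G y) - Real.log N - φ y + Real.log M)
      rw [Real.exp_add, Real.exp_sub, Real.exp_sub, Real.exp_log hGy, Real.exp_log hNpos,
        Real.exp_log hMpos] at h
      have h' := mul_le_mul_of_nonneg_left h (Real.exp_pos (φ y)).le
      have e : Real.exp (φ y) * (G y / N / Real.exp (φ y) * M) = M / N * G y := by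
        have := (Real.exp_pos (φ y)).ne'
        field_simp
      rw [e] at h'
      simp only
      linarith
    refine hle.trans (le_of_eq ?_)
    rw [integral_add (((hφ.mul hE).sub ((BddMeas.const _).mul hE)).int ν)
      ((((BddMeas.const _).mul hG).sub hE).int ν),
      integral_sub hpi (((BddMeas.const _).mul hE).int ν),
      integral_sub (((BddMeas.const _).mul hG).int ν) (hE.int ν), integral_const_mul,
      integral_const_mul, ← hM, ← hN, ← hp]
    field_simp
    ring
  -- The Jensen inequality `∫ φ ≤ log ∫ exp φ`.
  have h2 : m ≤ Real.log M := by
    have hle : ∫ y, (φ y + (1 - Real.log M)) ∂ν ≤ ∫ y, Real.exp (φ y) * M⁻¹ ∂ν := by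
      refine integral_mono ((hφ.add (BddMeas.const _)).int ν)
        ((hE.mul (BddMeas.const _)).int ν) fun y => ?_
      have h := Real.add_one_le_exp (φ y - Real.log M)
      rw [Real.exp_sub, Real.exp_log hMpos, div_eq_mul_inv] at h
      simp only
      linarith
    rw [integral_add (hφ.int ν) (integrable_const _), integral_mul_const, ← hM,
      mul_inv_cancel₀ hMpos.ne'] at hle
    simp at hle
    linarith
  -- Symmetrization of the covariance of `φ` and `exp φ`.
  set q := ∫ y, φ y ^ 2 ∂ν with hq
  set r := ∫ y, φ y ^ 2 * Real.exp (φ y) ∂ν with hr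
  have hin : ∀ a : ℝ, ∫ z, (a - φ z) ^ 2 ∂ν = a ^ 2 - 2 * a * m + q := by
    intro a
    have : ∀ z, (a - φ z) ^ 2 = a ^ 2 - 2 * a * φ z + φ z ^ 2 := fun z => by ring
    simp only [this]
    rw [integral_add (((BddMeas.const _).sub ((BddMeas.const _).mul hφ)).int ν)
      (hφ.pow_two.int ν), integral_sub (integrable_const _) (((BddMeas.const _).mul hφ).int ν),
      integral_const_mul]
    simp [hm, hq]
  have hrhs : ∫ y, ((1 / 2) * ∫ z, (φ y - φ z) ^ 2 ∂ν) * Real.exp (φ y) ∂ν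
      = (1 / 2) * (r - 2 * m * p + q * M) := by
    have : ∀ y, ((1 / 2) * ∫ z, (φ y - φ z) ^ 2 ∂ν) * Real.exp (φ y)
        = (1 / 2) * (φ y ^ 2 * Real.exp (φ y) - 2 * m * (φ y * Real.exp (φ y))
          + q * Real.exp (φ y)) := fun y => by rw [hin]; ring
    simp only [this]
    rw [integral_const_mul, integral_add (((hφ.pow_two.mul hE).sub
      ((BddMeas.const _).mul (hφ.mul hE))).int ν) (((BddMeas.const _).mul hE).int ν),
      integral_sub ((hφ.pow_two.mul hE).int ν) (((BddMeas.const _).mul (hφ.mul hE)).int ν),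
      integral_const_mul, integral_const_mul]
  have h3 : p - m * M ≤ (1 / 2) * (r - 2 * m * p + q * M) := by
    have hz : ∀ z, p - φ z * M - Real.exp (φ z) * m + φ z * Real.exp (φ z)
        ≤ (1 / 2) * (r - 2 * φ z * p + φ z ^ 2 * M
          + Real.exp (φ z) * (q - 2 * φ z * m + φ z ^ 2)) := by
      intro z
      set d := φ z
      have hle : ∫ y, (φ y * Real.exp (φ y) - d * Real.exp (φ y) - Real.exp d * φ y
            + d * Real.exp d) ∂ν
          ≤ ∫ y, (1 / 2) * (φ y ^ 2 * Real.exp (φ y) - 2 * d * (φ y * Real.exp (φ y))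
            + d ^ 2 * Real.exp (φ y)
            + Real.exp d * (φ y ^ 2 - 2 * d * φ y + d ^ 2)) ∂ν := by
        refine integral_mono (((((hφ.mul hE).sub ((BddMeas.const _).mul hE)).sub
          ((BddMeas.const _).mul hφ)).add (BddMeas.const _)).int ν)
          (((BddMeas.const _).mul ((((hφ.pow_two.mul hE).sub ((BddMeas.const _).mul
            (hφ.mul hE))).add ((BddMeas.const _).mul hE)).add ((BddMeas.const _).mul
            ((hφ.pow_two.sub ((BddMeas.const _).mul hφ)).add (BddMeas.const _))))).int ν)
          fun y => ?_
        have := mul_exp_sub_exp_le (φ y) d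
        simp only
        linarith
      rw [integral_add ((((hφ.mul hE).sub ((BddMeas.const _).mul hE)).sub
          ((BddMeas.const _).mul hφ)).int ν) (integrable_const _),
        integral_sub (((hφ.mul hE).sub ((BddMeas.const _).mul hE)).int ν)
          (((BddMeas.const _).mul hφ).int ν),
        integral_sub hpi (((BddMeas.const _).mul hE).int ν), integral_const,
        integral_const_mul, integral_const_mul, integral_const_mul,
        integral_add ((((hφ.pow_two.mul hE).sub ((BddMeas.const _).mul
            (hφ.mul hE))).add ((BddMeas.const _).mul hE)).int ν) (((BddMeas.const _).mul
            ((hφ.pow_two.sub ((BddMeas.const _).mul hφ)).add (BddMeas.const _))).int ν),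
        integral_add (((hφ.pow_two.mul hE).sub ((BddMeas.const _).mul (hφ.mul hE))).int ν)
          (((BddMeas.const _).mul hE).int ν),
        integral_sub ((hφ.pow_two.mul hE).int ν) (((BddMeas.const _).mul (hφ.mul hE)).int ν),
        integral_const_mul, integral_const_mul, integral_const_mul,
        integral_add ((hφ.pow_two.sub ((BddMeas.const _).mul hφ)).int ν) (integrable_const _),
        integral_sub (hφ.pow_two.int ν) (((BddMeas.const _).mul hφ).int ν),
        integral_const_mul] at hle
      simp only [integral_const, probReal_univ, smul_eq_mul, one_mul] at hle
      linarith
    have hL : BddMeas fun z => p - φ z * M - Real.exp (φ z) * m + φ z * Real.exp (φ z) :=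
      (((BddMeas.const _).sub (hφ.mul (BddMeas.const _))).sub (hE.mul (BddMeas.const _))).add
        (hφ.mul hE)
    have hR : BddMeas fun z => (1 / 2) * (r - 2 * p * φ z + M * φ z ^ 2
          + (q * Real.exp (φ z) - 2 * m * (φ z * Real.exp (φ z))
            + φ z ^ 2 * Real.exp (φ z))) :=
      (BddMeas.const _).mul ((((BddMeas.const _).sub ((BddMeas.const _).mul hφ)).add
        ((BddMeas.const _).mul hφ.pow_two)).add ((((BddMeas.const _).mul hE).sub
        ((BddMeas.const _).mul (hφ.mul hE))).add (hφ.pow_two.mul hE)))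
    have hle := integral_mono (hL.int ν) (hR.int ν) fun z => (hz z).trans (le_of_eq (by ring))
    rw [integral_add ((((BddMeas.const _).sub (hφ.mul (BddMeas.const _))).sub
        (hE.mul (BddMeas.const _))).int ν) hpi,
      integral_sub (((BddMeas.const _).sub (hφ.mul (BddMeas.const _))).int ν)
        ((hE.mul (BddMeas.const _)).int ν),
      integral_sub (integrable_const _) ((hφ.mul (BddMeas.const _)).int ν),
      integral_mul_const, integral_mul_const, integral_const_mul,
      integral_add ((((BddMeas.const _).sub ((BddMeas.const _).mul hφ)).add
        ((BddMeas.const _).mul hφ.pow_two)).int ν) (((((BddMeas.const _).mul hE).sub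
        ((BddMeas.const _).mul (hφ.mul hE))).add (hφ.pow_two.mul hE)).int ν),
      integral_add (((BddMeas.const _).sub ((BddMeas.const _).mul hφ)).int ν)
        (((BddMeas.const _).mul hφ.pow_two).int ν),
      integral_sub (integrable_const _) (((BddMeas.const _).mul hφ).int ν),
      integral_add ((((BddMeas.const _).mul hE).sub
        ((BddMeas.const _).mul (hφ.mul hE))).int ν) ((hφ.pow_two.mul hE).int ν),
      integral_sub (((BddMeas.const _).mul hE).int ν)
        (((BddMeas.const _).mul (hφ.mul hE)).int ν),
      integral_const_mul, integral_const_mul, integral_const_mul, integral_const_mul] at hle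
    simp only [integral_const, probReal_univ, smul_eq_mul, one_mul] at hle
    linarith
  rw [hrhs]
  have := mul_le_mul_of_nonneg_right h2 hMpos.le
  linarith

section mLSI

variable (μ : ∀ i, Measure (Ω i)) [∀ i, IsProbabilityMeasure (μ i)]

/-- One step of the tensorization of entropy. -/
lemma mLSI_step {g G : (∀ i, Ω i) → ℝ} (hg : BddMeas g) (hG : BddMeas G) {c : ℝ} (hc : 0 < c)
    (hcG : ∀ y, c ≤ G y) (i : Fin n) :
    ∫ x, Real.exp (g x) * (Real.log (G x) - Real.log (avg μ i G x)) ∂(Measure.pi μ)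
      ≤ ∫ x, dd μ g i x ^ 2 * Real.exp (g x) ∂(Measure.pi μ) := by
  have hav : ∀ x, c ≤ avg μ i G x := by
    intro x
    have : ∫ _, c ∂(μ i) ≤ avg μ i G x := integral_mono (integrable_const c)
      ((hG.comp (measurable_upd_right i x)).int _) fun y => hcG _
    simpa using this
  have hA : BddMeas fun x => Real.exp (g x) * (Real.log (G x) - Real.log (avg μ i G x)) :=
    hg.exp.mul ((hG.log hc hcG).sub ((hG.avg μ i).log hc hav))
  obtain ⟨hd, hdeq⟩ := hg.dd_sq μ i
  have hB := hd.mul hg.exp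
  rw [← integral_avg μ hA i, ← integral_avg μ hB i]
  refine integral_mono ((hA.avg μ i).int _) ((hB.avg μ i).int _) fun x => ?_
  have h := one_dim_mLSI (μ i) (hg.comp (measurable_upd_right i x))
    (hG.comp (measurable_upd_right i x)) hc fun y => hcG _
  simp only [avg]
  simp only [hdeq, Function.update_idem]
  exact h

/-- The modified logarithmic Sobolev inequality for the operator `𝔡` on product spaces. -/
lemma mLSI {g : (∀ i, Ω i) → ℝ} (hg : BddMeas g) :
    ∫ x, g x * Real.exp (g x) ∂(Measure.pi μ)
      - (∫ x, Real.exp (g x) ∂(Measure.pi μ)) * Real.log (∫ x, Real.exp (g x) ∂(Measure.pi μ))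
      ≤ ∫ x, ddNorm μ g x ^ 2 * Real.exp (g x) ∂(Measure.pi μ) := by
  obtain ⟨C, hC⟩ := hg.2
  have hE := hg.exp
  set c := Real.exp (-C) with hcdef
  have hc : 0 < c := Real.exp_pos _
  have hcg : ∀ x, c ≤ Real.exp (g x) := fun x =>
    Real.exp_le_exp.2 (neg_le_of_abs_le (hC x))
  have key : ∀ S : Finset (Fin n), ∃ G : (∀ i, Ω i) → ℝ, BddMeas G ∧ (∀ x, c ≤ G x) ∧
      ∫ x, G x ∂(Measure.pi μ) = ∫ x, Real.exp (g x) ∂(Measure.pi μ) ∧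
      (∀ i ∈ S, ∀ x y, G (Function.update x i y) = G x) ∧
      ∫ x, Real.exp (g x) * (g x - Real.log (G x)) ∂(Measure.pi μ)
        ≤ ∑ i ∈ S, ∫ x, dd μ g i x ^ 2 * Real.exp (g x) ∂(Measure.pi μ) := by
    intro S
    induction S using Finset.induction_on with
    | empty => exact ⟨fun x => Real.exp (g x), hE, hcg, rfl, by simp, by simp⟩
    | insert a s ha ih =>
      obtain ⟨G, hG, hcG, hint, hind, hle⟩ := ih
      have hav : ∀ x, c ≤ avg μ a G x := by
        intro x
        have : ∫ _, c ∂(μ a) ≤ avg μ a G x := integral_mono (integrable_const c)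
          ((hG.comp (measurable_upd_right a x)).int _) fun y => hcG _
        simpa using this
      refine ⟨avg μ a G, hG.avg μ a, hav, (integral_avg μ hG a).trans hint, ?_, ?_⟩
      · intro i hi x y
        rcases Finset.mem_insert.1 hi with rfl | hi
        · exact avg_update μ G i x y
        · exact avg_update_of_indep μ (hind i hi) x y
      · rw [Finset.sum_insert ha]
        have hs := mLSI_step μ hg hG hc hcG a
        have hlG := hG.log hc hcG
        have hlA := (hG.avg μ a).log hc hav
        have e : ∀ x, Real.exp (g x) * (g x - Real.log (avg μ a G x))
            = Real.exp (g x) * (Real.log (G x) - Real.log (avg μ a G x))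
              + Real.exp (g x) * (g x - Real.log (G x)) := fun x => by ring
        simp only [e]
        rw [integral_add ((hE.mul (hlG.sub hlA)).int _) ((hE.mul (hg.sub hlG)).int _)]
        exact add_le_add hs hle
  obtain ⟨G, hG, hcG, hint, hind, hle⟩ := key Finset.univ
  have hconst : ∀ x, G x = ∫ x, Real.exp (g x) ∂(Measure.pi μ) := by
    intro x
    have : ∀ y, G y = G x := fun y =>
      eq_of_indep (fun i x y => hind i (Finset.mem_univ i) x y) y x
    rw [← hint]
    simp [this]
  simp only [hconst] at hle
  set M := ∫ x, Real.exp (g x) ∂(Measure.pi μ) with hM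
  have e : ∀ x, Real.exp (g x) * (g x - Real.log M)
      = g x * Real.exp (g x) - Real.exp (g x) * Real.log M := fun x => by ring
  simp only [e] at hle
  rw [integral_sub ((hg.mul hE).int _) ((hE.mul (BddMeas.const _)).int _), integral_mul_const,
    ← hM] at hle
  refine hle.trans (le_of_eq ?_)
  simp only [ddNorm_sq, Finset.sum_mul]
  exact (integral_finsetSum _ fun i _ => ((hg.dd_sq μ i).1.mul hE).int _).symm

end mLSI

/-! ### Exponential moments -/

/-- The Herbst argument: an entropy bound along the ray `s • f`, `0 < s ≤ 1`, bounds the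
exponential moment of `f`. -/
lemma herbst {α : Type*} [MeasurableSpace α] (P : Measure α) [IsProbabilityMeasure P]
    {f : α → ℝ} (hf : BddMeas f) (hf0 : ∫ x, f x ∂P = 0) (H : ℝ)
    (hent : ∀ s : ℝ, 0 < s → s ≤ 1 →
      ∫ x, s * f x * Real.exp (s * f x) ∂P
        - (∫ x, Real.exp (s * f x) ∂P) * Real.log (∫ x, Real.exp (s * f x) ∂P)
        ≤ s ^ 2 * H * ∫ x, Real.exp (s * f x) ∂P) :
    ∫ x, Real.exp (f x) ∂P ≤ Real.exp H := by
  set M : ℝ → ℝ := ProbabilityTheory.mgf f P with hM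
  have hMs : ∀ s, M s = ∫ x, Real.exp (s * f x) ∂P := fun s => rfl
  have hset : ProbabilityTheory.integrableExpSet f P = Set.univ := by
    ext t
    simpa [ProbabilityTheory.integrableExpSet] using ((BddMeas.const t).mul hf).exp.int P
  have hMd : ∀ s, HasDerivAt M (∫ x, f x * Real.exp (s * f x) ∂P) s := fun s =>
    ProbabilityTheory.hasDerivAt_mgf (by simp [hset])
  have hMpos : ∀ s, 0 < M s := fun s => integral_exp_pos (((BddMeas.const s).mul hf).exp.int P)
  set M' : ℝ → ℝ := fun s => ∫ x, f x * Real.exp (s * f x) ∂P with hM'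
  have hKd : ∀ s, HasDerivAt (fun s => Real.log (M s)) (M' s / M s) s := fun s =>
    (hMd s).log (hMpos s).ne'
  have hM0 : M 0 = 1 := by simp [hMs]
  have hM'0 : M' 0 = 0 := by simp [hM', hf0]
  have hψd : ∀ s : ℝ, 0 < s → HasDerivAt (fun s => Real.log (M s) / s - H * s)
      ((M' s / M s * s - Real.log (M s) * 1) / s ^ 2 - H * 1) s := fun s hs =>
    ((hKd s).div (hasDerivAt_id s) hs.ne').sub ((hasDerivAt_id s).const_mul H)
  have hanti : AntitoneOn (fun s => Real.log (M s) / s - H * s) (Set.Ioc 0 1) := by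
    refine antitoneOn_of_deriv_nonpos (convex_Ioc 0 1)
      (fun s hs => (hψd s hs.1).continuousAt.continuousWithinAt)
      (fun s hs => (hψd s (interior_subset hs).1).differentiableAt.differentiableWithinAt)
      fun s hs => ?_
    obtain ⟨hs0, hs1⟩ := interior_subset hs
    rw [(hψd s hs0).deriv]
    have h := hent s hs0 hs1
    rw [← hMs] at h
    have e : ∫ x, s * f x * Real.exp (s * f x) ∂P = s * M' s := by
      simp only [mul_assoc]
      rw [integral_const_mul]
    rw [e] at h
    have hp := hMpos s
    have : (M' s / M s * s - Real.log (M s) * 1) / s ^ 2 ≤ H := by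
      rw [div_le_iff₀ (by positivity)]
      have : M' s / M s * s - Real.log (M s) * 1 = (s * M' s - M s * Real.log (M s)) / M s := by
        field_simp
      rw [this, div_le_iff₀ hp]
      linarith
    linarith
  have hlim : Filter.Tendsto (fun s => Real.log (M s) / s - H * s)
      (nhdsWithin 0 (Set.Ioi 0)) (nhds 0) := by
    have h1 : Filter.Tendsto (fun s => Real.log (M s) / s) (nhdsWithin 0 (Set.Ioi 0))
        (nhds 0) := by
      have h := (hKd 0).tendsto_slope_zero_right
      simp only [zero_add, hM0, hM'0, Real.log_one, sub_zero, zero_div, smul_eq_mul] at h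
      refine h.congr fun s => ?_
      rw [div_eq_inv_mul]
    have h2 : Filter.Tendsto (fun s : ℝ => H * s) (nhdsWithin 0 (Set.Ioi 0)) (nhds 0) := by
      have : Filter.Tendsto (fun s : ℝ => H * s) (nhds 0) (nhds (H * 0)) :=
        (continuous_const.mul continuous_id).tendsto 0
      rw [mul_zero] at this
      exact this.mono_left nhdsWithin_le_nhds
    simpa using h1.sub h2
  have hle : Real.log (M 1) / 1 - H * 1 ≤ 0 := by
    refine ge_of_tendsto hlim ?_
    filter_upwards [Ioc_mem_nhdsGT (zero_lt_one' ℝ)] with s hs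
    exact hanti hs ⟨zero_lt_one, le_rfl⟩ hs.2
  have : Real.log (M 1) ≤ H := by linarith
  have h2 := (Real.log_le_iff_le_exp (hMpos 1)).1 this
  simpa [hMs] using h2

/-- Gaussian linearization: a sub-Gaussian bound on all exponential moments of `X` yields a bound
on the exponential moment of `X ^ 2`. -/
lemma integral_exp_sq_le {α : Type*} [MeasurableSpace α] (P : Measure α) [IsProbabilityMeasure P]
    {X : α → ℝ} (hX : BddMeas X)
    (hmgf : ∀ t : ℝ, ∫ x, Real.exp (t * X x) ∂P ≤ Real.exp (t ^ 2)) :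
    ∫ x, Real.exp (1 / 9 * X x ^ 2) ∂P ≤ Real.sqrt (9 / 5) := by
  set γ := ProbabilityTheory.gaussianReal 0 1 with hγ
  set a : ℝ := Real.sqrt 2 / 3 with ha
  have ha2 : a ^ 2 = 2 / 9 := by
    rw [ha, div_pow, Real.sq_sqrt (by norm_num)]; norm_num
  have ha0 : 0 ≤ a := by positivity
  have hlin : ∀ x, Real.exp (1 / 9 * X x ^ 2) = ∫ z, Real.exp (a * X x * z) ∂γ := by
    intro x
    have h := ProbabilityTheory.mgf_gaussianReal (p := γ) (X := id) (μ := 0) (v := 1)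
      (by rw [Measure.map_id]) (a * X x)
    rw [ProbabilityTheory.mgf] at h
    simp only [id] at h
    rw [h, mul_pow, ha2]
    congr 1
    simp
    ring
  obtain ⟨C, hC⟩ := hX.2
  have hint : Integrable (Function.uncurry fun x z => Real.exp (a * X x * z)) (P.prod γ) := by
    have hdom : Integrable (fun p : α × ℝ => Real.exp (a * C * p.2) + Real.exp (-(a * C) * p.2))
        (P.prod γ) :=
      ((ProbabilityTheory.integrable_exp_mul_gaussianReal (a * C)).add
        (ProbabilityTheory.integrable_exp_mul_gaussianReal (-(a * C)))).comp_snd P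
    refine hdom.mono' ?_ (Filter.Eventually.of_forall fun p => ?_)
    · refine Measurable.aestronglyMeasurable ?_
      exact (((hX.1.comp measurable_fst).const_mul a).mul measurable_snd).exp
    · obtain ⟨x, z⟩ := p
      simp only [Function.uncurry, Real.norm_eq_abs, Real.abs_exp]
      have hb : |a * X x * z| ≤ |a * C * z| := by
        rw [abs_mul, abs_mul, abs_mul, abs_mul]
        exact mul_le_mul_of_nonneg_right (mul_le_mul_of_nonneg_left
          ((hC x).trans (le_abs_self C)) (abs_nonneg a)) (abs_nonneg z)
      have h1 : a * X x * z ≤ |a * C * z| := (le_abs_self _).trans hb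
      rcases abs_cases (a * C * z) with ⟨h2, _⟩ | ⟨h2, _⟩ <;> rw [h2] at h1
      · have := Real.exp_le_exp.2 h1
        have := Real.exp_pos (-(a * C) * z)
        linarith
      · rw [← neg_mul] at h1
        have := Real.exp_le_exp.2 h1
        have := Real.exp_pos (a * C * z)
        linarith
  simp only [hlin]
  rw [integral_integral_swap hint]
  have hpdf : ∀ z : ℝ, ProbabilityTheory.gaussianPDFReal 0 1 z * Real.exp (2 / 9 * z ^ 2)
      = (Real.sqrt (2 * Real.pi))⁻¹ * Real.exp (-(5 / 18) * z ^ 2) := by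
    intro z
    rw [ProbabilityTheory.gaussianPDFReal, mul_assoc, ← Real.exp_add]
    congr 2
    · simp
    · simp
      ring
  have hint2 : Integrable (fun z : ℝ => Real.exp (2 / 9 * z ^ 2)) γ := by
    rw [hγ, ProbabilityTheory.gaussianReal_of_var_ne_zero _ one_ne_zero,
      integrable_withDensity_iff_integrable_smul' (ProbabilityTheory.measurable_gaussianPDF 0 1)
        (Filter.Eventually.of_forall fun z => by simp [ProbabilityTheory.gaussianPDF])]
    simp only [ProbabilityTheory.toReal_gaussianPDF, smul_eq_mul, hpdf]
    exact (integrable_exp_neg_mul_sq (by norm_num)).const_mul _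
  have hle : ∫ z, ∫ x, Real.exp (a * X x * z) ∂P ∂γ ≤ ∫ z, Real.exp (2 / 9 * z ^ 2) ∂γ := by
    refine integral_mono hint.integral_prod_right hint2 fun z => ?_
    have h := hmgf (a * z)
    rw [mul_pow, ha2] at h
    refine le_trans (le_of_eq ?_) h
    simp only
    congr 1
    ext x
    ring_nf
  refine hle.trans (le_of_eq ?_)
  rw [hγ, ProbabilityTheory.integral_gaussianReal_eq_integral_smul one_ne_zero]
  simp only [smul_eq_mul, hpdf]
  rw [integral_const_mul, integral_gaussian, ← Real.sqrt_inv,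
    ← Real.sqrt_mul (by positivity)]
  congr 1
  have := Real.pi_pos
  field_simp
  norm_num

section moments

variable (μ : ∀ i, Measure (Ω i)) [∀ i, IsProbabilityMeasure (μ i)]

/-- First order concentration. -/
lemma integral_exp_le_of_ddNorm_sq_le {f : (∀ i, Ω i) → ℝ} (hf : BddMeas f)
    (hf0 : ∫ x, f x ∂(Measure.pi μ) = 0) {H : ℝ} (hH : ∀ x, ddNorm μ f x ^ 2 ≤ H) :
    ∫ x, Real.exp (f x) ∂(Measure.pi μ) ≤ Real.exp H := by
  refine herbst _ hf hf0 H fun s hs0 hs1 => ?_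
  have hsf : BddMeas fun x => s * f x := (BddMeas.const s).mul hf
  refine (mLSI μ hsf).trans ?_
  rw [← integral_const_mul]
  refine integral_mono (((hsf.ddNorm μ).pow_two.mul hsf.exp).int _)
    (((BddMeas.const _).mul hsf.exp).int _) fun x => ?_
  have h := ddNorm_sq_affine μ f s 0 x
  simp only [add_zero] at h
  simp only [h]
  exact mul_le_mul_of_nonneg_right (mul_le_mul_of_nonneg_left (hH x) (sq_nonneg s))
    (Real.exp_pos _).le

/-- An exponential moment of `|𝔡f|²` controls an exponential moment of `f`. -/
lemma integral_exp_le_of_integral_exp_ddNorm_sq {f : (∀ i, Ω i) → ℝ} (hf : BddMeas f)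
    (hf0 : ∫ x, f x ∂(Measure.pi μ) = 0) {H : ℝ} (hH0 : 0 ≤ H)
    (hH : ∫ x, Real.exp (2 * ddNorm μ f x ^ 2) ∂(Measure.pi μ) ≤ Real.exp H) :
    ∫ x, Real.exp (f x) ∂(Measure.pi μ) ≤ Real.exp H := by
  refine herbst _ hf hf0 H fun s hs0 hs1 => ?_
  have hsf : BddMeas fun x => s * f x := (BddMeas.const s).mul hf
  have hE := hsf.exp
  have hW := (hf.ddNorm μ).pow_two
  have hEW := ((BddMeas.const 2).mul hW).exp
  have hls := mLSI μ hsf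
  have h : ∀ x, ddNorm μ (fun x => s * f x) x ^ 2 = s ^ 2 * ddNorm μ f x ^ 2 := fun x => by
    have h := ddNorm_sq_affine μ f s 0 x
    simpa only [add_zero] using h
  simp only [h, mul_assoc (s ^ 2)] at hls
  rw [integral_const_mul] at hls
  set M := ∫ x, Real.exp (s * f x) ∂(Measure.pi μ) with hM
  have hMpos : 0 < M := integral_exp_pos (hE.int _)
  set p := ∫ x, s * f x * Real.exp (s * f x) ∂(Measure.pi μ) with hp
  set w := ∫ x, ddNorm μ f x ^ 2 * Real.exp (s * f x) ∂(Measure.pi μ) with hw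
  -- The Gibbs variational principle for the density `exp (s f) / M` and the potential `2 |𝔡f|²`.
  have hvar : 2 * w ≤ H * M + (p - M * Real.log M) := by
    have hle : ∫ x, 2 * (ddNorm μ f x ^ 2 * Real.exp (s * f x)) ∂(Measure.pi μ)
        ≤ ∫ x, ((H - Real.log M - 1) * Real.exp (s * f x) + s * f x * Real.exp (s * f x)
          + M * Real.exp (-H) * Real.exp (2 * ddNorm μ f x ^ 2)) ∂(Measure.pi μ) := by
      refine integral_mono (((BddMeas.const _).mul (hW.mul hE)).int _)
        (((((BddMeas.const _).mul hE).add (hsf.mul hE)).add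
          ((BddMeas.const _).mul hEW)).int _) fun x => ?_
      have h := Real.add_one_le_exp (2 * ddNorm μ f x ^ 2 + -H - s * f x + Real.log M)
      rw [Real.exp_add, Real.exp_sub, Real.exp_add, Real.exp_log hMpos] at h
      have h' := mul_le_mul_of_nonneg_left h (Real.exp_pos (s * f x)).le
      have e : Real.exp (s * f x) * (Real.exp (2 * ddNorm μ f x ^ 2) * Real.exp (-H)
          / Real.exp (s * f x) * M) = M * Real.exp (-H) * Real.exp (2 * ddNorm μ f x ^ 2) := by
        have := (Real.exp_pos (s * f x)).ne'
        field_simp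
      rw [e] at h'
      simp only
      linarith
    rw [integral_const_mul, integral_add ((((BddMeas.const _).mul hE).add (hsf.mul hE)).int _)
      (((BddMeas.const _).mul hEW).int _), integral_add (((BddMeas.const _).mul hE).int _)
      ((hsf.mul hE).int _), integral_const_mul, integral_const_mul, ← hM, ← hp, ← hw] at hle
    have h1 := mul_le_mul_of_nonneg_left hH (mul_pos hMpos (Real.exp_pos (-H))).le
    rw [mul_assoc M, mul_assoc M, ← Real.exp_add, neg_add_cancel, Real.exp_zero] at h1
    rw [mul_assoc M] at hle
    linarith
  have hs2 : s ^ 2 ≤ 1 := by nlinarith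
  have hs2' : 0 < s ^ 2 := by positivity
  have hHM : 0 ≤ H * M := mul_nonneg hH0 hMpos.le
  set T := p - M * Real.log M
  have h1 : T ≤ s ^ 2 * ((H * M + T) / 2) :=
    hls.trans (mul_le_mul_of_nonneg_left (by linarith) hs2'.le)
  by_contra hcon
  push Not at hcon
  have h3 : s ^ 2 * (H * M) < T := by linarith
  have hT : 0 ≤ T := (mul_nonneg hs2'.le hHM).trans h3.le
  have h4 : s ^ 2 * T ≤ T := mul_le_of_le_one_left hT hs2
  linarith

/-- Exponential integrability of the square of a function with `|𝔡g| ≤ 1`, around its mean. -/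
lemma integral_exp_sq_centered_le {g : (∀ i, Ω i) → ℝ} (hg : BddMeas g)
    (hd : ∀ x, ddNorm μ g x ≤ 1) :
    ∫ x, Real.exp (1 / 9 * (g x - ∫ y, g y ∂(Measure.pi μ)) ^ 2) ∂(Measure.pi μ)
      ≤ Real.sqrt (9 / 5) := by
  set m := ∫ y, g y ∂(Measure.pi μ) with hm
  refine integral_exp_sq_le (Measure.pi μ) (hg.sub (BddMeas.const m)) fun t => ?_
  have e : ∀ x, t * (g x - m) = t * g x + -(t * m) := fun x => by ring
  simp only [e]
  refine integral_exp_le_of_ddNorm_sq_le μ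
    (((BddMeas.const t).mul hg).add (BddMeas.const _)) ?_ fun x => ?_
  · rw [integral_add (((BddMeas.const t).mul hg).int _) (integrable_const _), integral_const_mul]
    simp [← hm]
  · rw [ddNorm_sq_affine]
    have h0 : 0 ≤ ddNorm μ g x := Real.sqrt_nonneg _
    have h1 : ddNorm μ g x ^ 2 ≤ 1 := by have := hd x; nlinarith
    nlinarith [sq_nonneg t]

end moments

/-! ### Hoeffding kernels -/

section hoeffding

variable {μ : ∀ i, Measure (Ω i)} [∀ i, IsProbabilityMeasure (μ i)]
  {h : Finset (Fin n) → (∀ i, Ω i) → ℝ}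

lemma IsHoeffdingKernels.update (hker : IsHoeffdingKernels μ h) {S : Finset (Fin n)} {i : Fin n}
    (hi : i ∉ S) (x : ∀ i, Ω i) (y : Ω i) : h S (Function.update x i y) = h S x :=
  hker.localized S _ _ fun _ hj =>
    Function.update_of_ne (ne_of_mem_of_not_mem hj hi) _ _

/-- Averaging over the `i`-th coordinate removes exactly the kernels involving `i`. -/
lemma IsHoeffdingKernels.avg_sum (hker : IsHoeffdingKernels μ h)
    (A : Finset (Finset (Fin n))) (i : Fin n) (x : ∀ i, Ω i) :
    ∫ y, ∑ S ∈ A, h S (Function.update x i y) ∂(μ i) = ∑ S ∈ A.filter (fun S => i ∉ S), h S x := by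
  rw [integral_finsetSum _ fun S _ => hker.integrable S i x, Finset.sum_filter]
  refine Finset.sum_congr rfl fun S _ => ?_
  by_cases hi : i ∈ S
  · simp [hi, hker.degenerate S i hi x]
  · simp [hi, hker.update hi]

lemma IsHoeffdingKernels.DD_sum (hker : IsHoeffdingKernels μ h)
    (A : Finset (Finset (Fin n))) (i : Fin n) :
    DD μ (fun y => ∑ S ∈ A, h S y) i
      = fun x => ∑ S ∈ A.filter (fun S => i ∈ S), h S x := by
  ext x
  rw [DD, hker.avg_sum, ← Finset.sum_filter_add_sum_filter_not A (fun S => i ∈ S)]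
  ring

/-- The partial sums over `S ⊆ T` are obtained from the bounded function `f` by averaging, so
they are bounded, and hence so are the kernels. -/
lemma IsHoeffdingKernels.bddMeas (hker : IsHoeffdingKernels μ h) {f : (∀ i, Ω i) → ℝ}
    (hbdd : ∃ C, ∀ x, |f x| ≤ C) (hsum : ∀ x, f x = ∑ S : Finset (Fin n), h S x)
    (T : Finset (Fin n)) : BddMeas (h T) := by
  obtain ⟨C, hC⟩ := hbdd
  have key : ∀ U : Finset (Fin n), ∀ x,
      |∑ S ∈ Finset.univ.filter (fun S : Finset (Fin n) => Disjoint U S), h S x| ≤ C := by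
    intro U
    induction U using Finset.induction_on with
    | empty =>
      intro x
      simpa [← hsum] using hC x
    | insert a U ha ih =>
      intro x
      have e : (Finset.univ.filter (fun S : Finset (Fin n) => Disjoint (insert a U) S))
          = (Finset.univ.filter (fun S : Finset (Fin n) => Disjoint U S)).filter
              (fun S => a ∉ S) := by
        ext S
        simp [Finset.disjoint_insert_left, and_comm]
      rw [e, ← hker.avg_sum]
      have := norm_integral_le_of_norm_le_const (μ := μ a) (C := C)
        (f := fun y => ∑ S ∈ Finset.univ.filter (fun S : Finset (Fin n) => Disjoint U S),
          h S (Function.update x a y))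
        (Filter.Eventually.of_forall fun y => ih _)
      simpa using this
  induction T using Finset.strongInduction with
  | H T ih =>
    have hsub : ∀ x, ∑ S ∈ Finset.univ.filter (fun S : Finset (Fin n) => Disjoint Tᶜ S), h S x
        = h T x + ∑ S ∈ T.ssubsets, h S x := by
      intro x
      have e : Finset.univ.filter (fun S : Finset (Fin n) => Disjoint Tᶜ S) = T.powerset := by
        ext S
        simp [disjoint_compl_left_iff]
      rw [e, Finset.ssubsets, Finset.add_sum_erase _ (fun S => h S x)
        (Finset.mem_powerset_self T)]
    obtain ⟨-, D, hD⟩ := BddMeas.sum T.ssubsets (F := h)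
      fun S hS => ih S (Finset.mem_ssubsets.1 hS)
    refine ⟨hker.meas T, C + D, fun x => ?_⟩
    have h1 := key Tᶜ x
    rw [hsub] at h1
    have h2 := hD x
    have e : h T x = (h T x + ∑ S ∈ T.ssubsets, h S x) - ∑ S ∈ T.ssubsets, h S x := by ring
    rw [e]
    exact (abs_sub _ _).trans (add_le_add h1 h2)

lemma hoeffding_integral_eq_zero (hker : IsHoeffdingKernels μ h) (hb : ∀ T, BddMeas (h T))
    {S : Finset (Fin n)} (hS : S.Nonempty) :
    ∫ x, h S x ∂(Measure.pi μ) = 0 := by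
  obtain ⟨i, hi⟩ := hS
  rw [← integral_avg μ (hb S) i]
  have : ∀ x, avg μ i (h S) x = 0 := fun x => hker.degenerate S i hi x
  simp [this]

lemma hoeffding_orthogonal (hker : IsHoeffdingKernels μ h) (hb : ∀ T, BddMeas (h T))
    {S T : Finset (Fin n)} (hST : S ≠ T) :
    ∫ x, h S x * h T x ∂(Measure.pi μ) = 0 := by
  have key : ∀ {S T : Finset (Fin n)} {i : Fin n}, i ∈ S → i ∉ T →
      ∫ x, h S x * h T x ∂(Measure.pi μ) = 0 := by
    intro S T i hS hT
    rw [← integral_avg μ ((hb S).mul (hb T)) i]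
    have : ∀ x, avg μ i (fun x => h S x * h T x) x = 0 := by
      intro x
      simp only [avg, hker.update hT]
      rw [integral_mul_const, hker.degenerate S i hS x, zero_mul]
    simp [this]
  by_cases hsub : S ⊆ T
  · obtain ⟨i, hT, hS⟩ := Finset.exists_of_ssubset (hsub.ssubset_of_ne hST)
    simp only [mul_comm (h S _)]
    exact key hT hS
  · obtain ⟨i, hS, hT⟩ := Finset.not_subset.1 hsub
    exact key hS hT

lemma hoeffding_integral_sq (hker : IsHoeffdingKernels μ h) (hb : ∀ T, BddMeas (h T))
    (A : Finset (Finset (Fin n))) :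
    ∫ x, (∑ S ∈ A, h S x) ^ 2 ∂(Measure.pi μ) = ∑ S ∈ A, ∫ x, h S x ^ 2 ∂(Measure.pi μ) := by
  simp only [sq, Finset.sum_mul_sum]
  rw [integral_finsetSum _ fun S _ => (BddMeas.sum A fun T _ => (hb S).mul (hb T)).int _]
  refine Finset.sum_congr rfl fun S hS => ?_
  rw [integral_finsetSum _ fun T _ => ((hb S).mul (hb T)).int _]
  exact Finset.sum_eq_single_of_mem S hS fun T _ hT => hoeffding_orthogonal hker hb hT.symm

lemma hoeffding_integral_dd_sq (hker : IsHoeffdingKernels μ h) (hb : ∀ T, BddMeas (h T))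
    (A : Finset (Finset (Fin n))) (i : Fin n) :
    ∫ x, dd μ (fun y => ∑ S ∈ A, h S y) i x ^ 2 ∂(Measure.pi μ)
      = ∑ S ∈ A.filter (fun S => i ∈ S), ∫ x, h S x ^ 2 ∂(Measure.pi μ) := by
  set v : (∀ i, Ω i) → ℝ := fun x => ∑ S ∈ A.filter (fun S => i ∈ S), h S x with hv
  have hvb : BddMeas v := BddMeas.sum _ fun S _ => hb S
  have hv0 : ∀ x, ∫ y, v (Function.update x i y) ∂(μ i) = 0 := by
    intro x
    rw [hker.avg_sum, Finset.filter_filter]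
    simp
  have hdiff : ∀ x y, (∑ S ∈ A, h S x) - ∑ S ∈ A, h S (Function.update x i y)
      = v x - v (Function.update x i y) := by
    intro x y
    rw [← Finset.sum_filter_add_sum_filter_not A (fun S => i ∈ S),
      ← Finset.sum_filter_add_sum_filter_not A (fun S => i ∈ S)
        (fun S => h S (Function.update x i y))]
    have : ∑ S ∈ A.filter (fun S => i ∉ S), h S (Function.update x i y)
        = ∑ S ∈ A.filter (fun S => i ∉ S), h S x :=
      Finset.sum_congr rfl fun S hS => hker.update (Finset.mem_filter.1 hS).2 x y
    rw [this]
    simp only [hv]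
    ring
  have hpt : ∀ x, dd μ (fun y => ∑ S ∈ A, h S y) i x ^ 2
      = (1 / 2) * (v x ^ 2 + avg μ i (fun x => v x ^ 2) x) := by
    intro x
    rw [((BddMeas.sum A fun S _ => hb S).dd_sq μ i).2]
    simp only [hdiff]
    have hvx := hvb.comp (measurable_upd_right i x)
    have : ∀ y, (v x - v (Function.update x i y)) ^ 2
        = v x ^ 2 - 2 * v x * v (Function.update x i y) + v (Function.update x i y) ^ 2 :=
      fun y => by ring
    simp only [this]
    rw [integral_add (((BddMeas.const _).sub ((BddMeas.const _).mul hvx)).int _)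
      (hvx.pow_two.int _), integral_sub (integrable_const _)
      (((BddMeas.const _).mul hvx).int _), integral_const_mul, hv0]
    simp [avg]
  simp only [hpt]
  rw [integral_const_mul, integral_add (hvb.pow_two.int _) ((hvb.pow_two.avg μ i).int _),
    integral_avg μ hvb.pow_two i, hoeffding_integral_sq hker hb]
  ring

lemma hoeffding_integral_ddNorm_sq (hker : IsHoeffdingKernels μ h) (hb : ∀ T, BddMeas (h T))
    (A : Finset (Finset (Fin n))) :
    ∫ x, ddNorm μ (fun y => ∑ S ∈ A, h S y) x ^ 2 ∂(Measure.pi μ)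
      = ∑ S ∈ A, (S.card : ℝ) * ∫ x, h S x ^ 2 ∂(Measure.pi μ) := by
  simp only [ddNorm_sq]
  rw [integral_finsetSum _ fun i _ => ((BddMeas.sum A fun S _ => hb S).dd_sq μ i).1.int _]
  simp only [hoeffding_integral_dd_sq hker hb, Finset.sum_filter]
  rw [Finset.sum_comm]
  refine Finset.sum_congr rfl fun S _ => ?_
  simp

/-- In the Hessian every kernel of order `d` is counted `d (d - 1)` times. -/
lemma hoeffding_integral_D2HSsq (hker : IsHoeffdingKernels μ h) (hb : ∀ T, BddMeas (h T))
    {f : (∀ i, Ω i) → ℝ}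
    (hsum : ∀ x, f x = ∑ S : Finset (Fin n), h S x) :
    ∫ x, D2HSsq μ f x ∂(Measure.pi μ)
      = ∑ S : Finset (Fin n), (S.card : ℝ) * ((S.card : ℝ) - 1)
          * ∫ x, h S x ^ 2 ∂(Measure.pi μ) := by
  have hfe : f = fun x => ∑ S : Finset (Fin n), h S x := funext hsum
  have hDD : ∀ i j, DD μ (DD μ f j) i = fun x =>
      ∑ S ∈ (Finset.univ.filter (fun S : Finset (Fin n) => j ∈ S)).filter (fun S => i ∈ S),
        h S x := by
    intro i j
    rw [hfe, hker.DD_sum, hker.DD_sum]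
  have hent : ∀ i j : Fin n,
      BddMeas (fun x => if i = j then 0 else DD μ (DD μ f j) i x ^ 2) := by
    intro i j
    by_cases hij : i = j
    · simpa [hij] using BddMeas.const (0 : ℝ)
    · simp only [hij, if_false, hDD]
      exact (BddMeas.sum _ fun S _ => hb S).pow_two
  have hval : ∀ i j : Fin n,
      ∫ x, (if i = j then 0 else DD μ (DD μ f j) i x ^ 2) ∂(Measure.pi μ)
        = ∑ S : Finset (Fin n), (if i ∈ S then if j ∈ S.erase i then
            ∫ x, h S x ^ 2 ∂(Measure.pi μ) else 0 else 0) := by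
    intro i j
    by_cases hij : i = j
    · simp [hij]
    · simp only [hij, if_false, hDD]
      rw [hoeffding_integral_sq hker hb, Finset.filter_filter, Finset.sum_filter]
      refine Finset.sum_congr rfl fun S _ => ?_
      by_cases hi : i ∈ S <;> by_cases hj : j ∈ S <;> simp [hi, hj, Ne.symm hij]
  simp only [D2HSsq]
  rw [integral_finsetSum _ fun i _ => (BddMeas.sum _ fun j _ => hent i j).int _]
  simp only [integral_finsetSum _ fun j _ => (hent _ j).int _, hval]
  have : ∀ i : Fin n, ∑ j : Fin n, ∑ S : Finset (Fin n), (if i ∈ S then if j ∈ S.erase i then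
            ∫ x, h S x ^ 2 ∂(Measure.pi μ) else 0 else 0)
      = ∑ S : Finset (Fin n), if i ∈ S then
          ((S.card : ℝ) - 1) * ∫ x, h S x ^ 2 ∂(Measure.pi μ) else 0 := by
    intro i
    rw [Finset.sum_comm]
    refine Finset.sum_congr rfl fun S _ => ?_
    by_cases hi : i ∈ S
    · simp only [hi, if_true]
      rw [← Finset.sum_filter, Finset.sum_const, Finset.filter_mem_eq_inter,
        Finset.univ_inter, Finset.card_erase_of_mem hi, nsmul_eq_mul,
        Nat.cast_sub (Finset.card_pos.2 ⟨i, hi⟩), Nat.cast_one]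
    · simp [hi]
  simp only [this]
  rw [Finset.sum_comm]
  refine Finset.sum_congr rfl fun S _ => ?_
  rw [← Finset.sum_filter, Finset.sum_const, Finset.filter_mem_eq_inter,
    Finset.univ_inter, nsmul_eq_mul, mul_assoc]

end hoeffding

/-- Two-sided exponential moments combine via `exp (|φ| / 2) ≤ 1 + exp |φ| / 4`. -/
lemma integral_exp_half_abs_le {α : Type*} [MeasurableSpace α] (P : Measure α)
    [IsProbabilityMeasure P] {φ : α → ℝ} (hφ : BddMeas φ)
    (h1 : ∫ x, Real.exp (φ x) ∂P ≤ 2) (h2 : ∫ x, Real.exp (-φ x) ∂P ≤ 2) :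
    ∫ x, Real.exp (|φ x| / 2) ∂P ≤ 2 := by
  have hle : ∫ x, Real.exp (|φ x| / 2) ∂P
      ≤ ∫ x, ((Real.exp (φ x) + Real.exp (-φ x)) * (1 / 4) + 1) ∂P := by
    have hab : BddMeas fun x => |φ x| / 2 := by
      simpa only [div_eq_mul_inv] using hφ.abs.mul (BddMeas.const (2 : ℝ)⁻¹)
    refine integral_mono (hab.exp.int P)
      ((((hφ.exp.add hφ.neg.exp).mul (BddMeas.const _)).add (BddMeas.const _)).int P) fun x => ?_
    have hsq : Real.exp |φ x| = Real.exp (|φ x| / 2) ^ 2 := by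
      rw [← Real.exp_nat_mul]; ring_nf
    have habs : Real.exp |φ x| ≤ Real.exp (φ x) + Real.exp (-φ x) := Real.exp_abs_le _
    simp only
    nlinarith [sq_nonneg (Real.exp (|φ x| / 2) - 2)]
  rw [integral_add (((hφ.exp.add hφ.neg.exp).mul (BddMeas.const _)).int P) (integrable_const _),
    integral_mul_const, integral_add (hφ.exp.int P) (hφ.neg.exp.int P)] at hle
  simp at hle
  linarith

/-! ### Second order concentration -/

/-- Second order concentration with a non-vanishing first order Hoeffding term
(Theorem 1.5): if `f = f₁ + Rf` with `|𝔡f₁| ≤ b₀`, `|𝔡|𝔡Rf|| ≤ 1` and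
`∫ ‖𝔇⁽²⁾f‖²_HS dμ ≤ b²`, then `∫ exp(|f|/(12+4b²+7b₀)) dμ ≤ 2`. -/
theorem second_order_concentration_with_first_order
    (μ : ∀ i, Measure (Ω i)) [∀ i, IsProbabilityMeasure (μ i)]
    (f : (∀ i, Ω i) → ℝ) (hmeas : Measurable f) (hbdd : ∃ C, ∀ x, |f x| ≤ C)
    (h : Finset (Fin n) → (∀ i, Ω i) → ℝ) (hker : IsHoeffdingKernels μ h)
    (hsum : ∀ x, f x = ∑ S : Finset (Fin n), h S x)
    (h0 : h ∅ = 0)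
    (b0 : ℝ) (hb0 : 0 ≤ b0)
    (hf1 : ∀ x, ddNorm μ
      (fun y => ∑ S ∈ Finset.univ.filter (fun S : Finset (Fin n) => S.card = 1), h S y) x ≤ b0)
    (hR : ∀ x, ddNorm μ
      (fun y => ddNorm μ
        (fun z => ∑ S ∈ Finset.univ.filter (fun S : Finset (Fin n) => 2 ≤ S.card), h S z) y) x ≤ 1)
    (b : ℝ) (hb : 0 ≤ b)
    (hHS : ∫ x, D2HSsq μ f x ∂(Measure.pi μ) ≤ b ^ 2) :
    ∫ x, Real.exp (|f x| / (12 + 4 * b ^ 2 + 7 * b0)) ∂(Measure.pi μ) ≤ 2 := by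
  have hb' : ∀ T, BddMeas (h T) := hker.bddMeas hbdd hsum
  have hfB : BddMeas f := ⟨hmeas, hbdd⟩
  set A1 := Finset.univ.filter (fun S : Finset (Fin n) => S.card = 1) with hA1
  set A2 := Finset.univ.filter (fun S : Finset (Fin n) => 2 ≤ S.card) with hA2
  set f1 : (∀ i, Ω i) → ℝ := fun y => ∑ S ∈ A1, h S y with hf1def
  set u : (∀ i, Ω i) → ℝ := fun y => ∑ S ∈ A2, h S y with hudef
  have hf1B : BddMeas f1 := BddMeas.sum _ fun S _ => hb' S
  have huB : BddMeas u := BddMeas.sum _ fun S _ => hb' S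
  have hfu : ∀ x, f x = f1 x + u x := by
    intro x
    rw [hsum]
    simp only [hf1def, hudef, hA1, hA2, Finset.sum_filter]
    rw [← Finset.sum_add_distrib]
    refine Finset.sum_congr rfl fun S _ => ?_
    rcases Nat.lt_or_ge S.card 2 with hS | hS
    · rcases Nat.lt_or_ge S.card 1 with hS1 | hS1
      · have : S = ∅ := Finset.card_eq_zero.1 (by omega)
        simp [this, h0]
      · have : S.card = 1 := by omega
        simp [this]
    · have : S.card ≠ 1 := by omega
      simp [this, hS]
  have hmean : ∀ A : Finset (Finset (Fin n)), (∀ S ∈ A, 1 ≤ S.card) →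
      ∫ x, ∑ S ∈ A, h S x ∂(Measure.pi μ) = 0 := by
    intro A hA
    rw [integral_finsetSum _ fun S _ => (hb' S).int _]
    exact Finset.sum_eq_zero fun S hS =>
      hoeffding_integral_eq_zero hker hb' (Finset.card_pos.1 (hA S hS))
  have hf10 : ∫ x, f1 x ∂(Measure.pi μ) = 0 :=
    hmean A1 fun S hS => (Finset.mem_filter.1 hS).2.ge
  have hu0 : ∫ x, u x ∂(Measure.pi μ) = 0 :=
    hmean A2 fun S hS => one_le_two.trans (Finset.mem_filter.1 hS).2
  have hscale : ∀ (v : (∀ i, Ω i) → ℝ) (t : ℝ) (x : ∀ i, Ω i),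
      ddNorm μ (fun x => t * v x) x ^ 2 = t ^ 2 * ddNorm μ v x ^ 2 := fun v t x => by
    simpa only [add_zero] using ddNorm_sq_affine μ v t 0 x
  -- The second moment of `|𝔡Rf|` is controlled by the Hessian, since `d ≤ d (d - 1)` for `2 ≤ d`.
  set g := ddNorm μ u with hg
  have hgB : BddMeas g := huB.ddNorm μ
  set m := ∫ x, g x ∂(Measure.pi μ) with hm
  have hg2 : ∫ x, g x ^ 2 ∂(Measure.pi μ) ≤ b ^ 2 := by
    refine le_trans ?_ hHS
    rw [hoeffding_integral_D2HSsq hker hb' hsum, hg, hudef,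
      hoeffding_integral_ddNorm_sq hker hb', hA2, Finset.sum_filter]
    refine Finset.sum_le_sum fun S _ => ?_
    have hi : 0 ≤ ∫ x, h S x ^ 2 ∂(Measure.pi μ) := integral_nonneg fun x => sq_nonneg _
    split_ifs with hS
    · have : (2 : ℝ) ≤ S.card := by exact_mod_cast hS
      refine mul_le_mul_of_nonneg_right ?_ hi
      nlinarith
    · have : S.card = 0 ∨ S.card = 1 := by omega
      rcases this with hS | hS <;> simp [hS]
  have hm2 : m ^ 2 ≤ b ^ 2 := by
    have h1 : 0 ≤ ∫ x, (g x ^ 2 - 2 * m * g x + m ^ 2) ∂(Measure.pi μ) :=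
      integral_nonneg fun x => by
        have : g x ^ 2 - 2 * m * g x + m ^ 2 = (g x - m) ^ 2 := by ring
        simp only [this]
        exact sq_nonneg _
    rw [integral_add ((hgB.pow_two.sub ((BddMeas.const _).mul hgB)).int _) (integrable_const _),
      integral_sub (hgB.pow_two.int _) (((BddMeas.const _).mul hgB).int _), integral_const_mul,
      ← hm] at h1
    simp at h1
    nlinarith
  set A : ℝ := 12 + 4 * b ^ 2 with hA
  have hA12 : 12 ≤ A := by nlinarith [sq_nonneg b]
  have hApos : 0 < A := by linarith
  -- The higher order part.
  have hexpW : ∀ t : ℝ, t ^ 2 = (2 / A) ^ 2 →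
      ∫ x, Real.exp (t * u x) ∂(Measure.pi μ) ≤ 2 := by
    intro t ht
    rw [← Real.exp_log (zero_lt_two' ℝ)]
    refine integral_exp_le_of_integral_exp_ddNorm_sq μ ((BddMeas.const t).mul huB)
      (by rw [integral_const_mul, hu0, mul_zero]) (Real.log_nonneg one_le_two) ?_
    rw [Real.exp_log (zero_lt_two' ℝ)]
    simp only [hscale, ht]
    have hc1 : 4 * (2 / A) ^ 2 ≤ 1 / 9 := by
      rw [div_pow, ← mul_div_assoc, div_le_div_iff₀ (by positivity) (by norm_num)]
      nlinarith
    -- `(12 + 4 b²)² ≥ 192 b²` by the inequality of arithmetic and geometric means.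
    have hc2 : 4 * (2 / A) ^ 2 * m ^ 2 ≤ 1 / 12 := by
      have h1 : 4 * (2 / A) ^ 2 * m ^ 2 ≤ 4 * (2 / A) ^ 2 * b ^ 2 :=
        mul_le_mul_of_nonneg_left hm2 (by positivity)
      refine h1.trans ?_
      rw [div_pow, ← mul_div_assoc, div_mul_eq_mul_div,
        div_le_div_iff₀ (by positivity) (by norm_num), hA]
      nlinarith [sq_nonneg (12 - 4 * b ^ 2)]
    have hX : BddMeas fun x => Real.exp (1 / 9 * (g x - m) ^ 2) :=
      ((BddMeas.const _).mul (hgB.sub (BddMeas.const m)).pow_two).exp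
    have hle : ∫ x, Real.exp (2 * ((2 / A) ^ 2 * g x ^ 2)) ∂(Measure.pi μ)
        ≤ ∫ x, Real.exp (1 / 12) * Real.exp (1 / 9 * (g x - m) ^ 2) ∂(Measure.pi μ) := by
      refine integral_mono
        (((BddMeas.const _).mul ((BddMeas.const _).mul hgB.pow_two)).exp.int _)
        (((BddMeas.const _).mul hX).int _) fun x => ?_
      simp only
      rw [← Real.exp_add]
      refine Real.exp_le_exp.2 ?_
      have hs : g x ^ 2 ≤ 2 * m ^ 2 + 2 * (g x - m) ^ 2 := by nlinarith [sq_nonneg (g x - 2 * m)]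
      have h1 := mul_le_mul_of_nonneg_left hs (sq_nonneg (2 / A))
      have h2 := mul_le_mul_of_nonneg_right hc1 (sq_nonneg (g x - m))
      linarith
    refine hle.trans ?_
    rw [integral_const_mul]
    have hG := integral_exp_sq_centered_le μ hgB hR
    have hsq : Real.sqrt (9 / 5) ≤ 3 / 2 := Real.sqrt_le_iff.2 ⟨by norm_num, by norm_num⟩
    have he : Real.exp (1 / 12) ≤ 12 / 11 := by
      have h1 := Real.add_one_le_exp (-(1 / 12) : ℝ)
      rw [Real.exp_neg] at h1
      have h2 : (11 / 12 : ℝ) ≤ (Real.exp (1 / 12))⁻¹ := by linarith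
      have h3 := (le_inv_comm₀ (by norm_num) (Real.exp_pos _)).1 h2
      norm_num at h3 ⊢
      exact h3
    have := mul_le_mul he (hG.trans hsq) (integral_nonneg fun x => (Real.exp_pos _).le)
      (by norm_num)
    linarith
  have hu2 : ∫ x, Real.exp (|u x| / A) ∂(Measure.pi μ) ≤ 2 := by
    have h1 := hexpW (2 / A) rfl
    have h2 := hexpW (-(2 / A)) (by ring)
    have h3 := integral_exp_half_abs_le (Measure.pi μ) ((BddMeas.const (2 / A)).mul huB) h1
      (by simpa only [neg_mul] using h2)
    refine le_trans (le_of_eq ?_) h3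
    congr 1
    ext x
    rw [abs_mul, abs_of_pos (by positivity : 0 < 2 / A)]
    congr 1
    ring
  -- The first order part; for `b0 = 0` the quotient `|f1| / (7 * b0)` is `0`.
  have hf12 : ∫ x, Real.exp (|f1 x| / (7 * b0)) ∂(Measure.pi μ) ≤ 2 := by
    rcases hb0.eq_or_lt with hz | hpos
    · rw [← hz]
      simp
    have hsc : ∀ t : ℝ, t ^ 2 = (2 / (7 * b0)) ^ 2 →
        ∫ x, Real.exp (t * f1 x) ∂(Measure.pi μ) ≤ 2 := by
      intro t ht
      rw [← Real.exp_log (zero_lt_two' ℝ)]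
      refine integral_exp_le_of_ddNorm_sq_le μ ((BddMeas.const t).mul hf1B)
        (by rw [integral_const_mul, hf10, mul_zero]) fun x => ?_
      rw [hscale, ht]
      have hn : ddNorm μ f1 x ^ 2 ≤ b0 ^ 2 :=
        pow_le_pow_left₀ (Real.sqrt_nonneg _) (hf1 x) 2
      have h1 : (2 / (7 * b0)) ^ 2 * ddNorm μ f1 x ^ 2 ≤ (2 / (7 * b0)) ^ 2 * b0 ^ 2 :=
        mul_le_mul_of_nonneg_left hn (sq_nonneg _)
      have h2 : (2 / (7 * b0)) ^ 2 * b0 ^ 2 = 4 / 49 := by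
        field_simp
        norm_num
      have := Real.log_two_gt_d9
      linarith
    have h1 := hsc (2 / (7 * b0)) rfl
    have h2 := hsc (-(2 / (7 * b0))) (by ring)
    have h3 := integral_exp_half_abs_le (Measure.pi μ) ((BddMeas.const (2 / (7 * b0))).mul hf1B) h1
      (by simpa only [neg_mul] using h2)
    refine le_trans (le_of_eq ?_) h3
    congr 1
    ext x
    rw [abs_mul, abs_of_pos (by positivity : 0 < 2 / (7 * b0))]
    congr 1
    ring
  -- If `b0 = 0`, then `∫ f1² = ∫ |𝔡f1|² = 0`, so the first order part vanishes almost everywhere.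
  have hzero : b0 = 0 → ∀ᵐ x ∂(Measure.pi μ), f1 x = 0 := by
    intro hz
    have hdz : ∀ x, ddNorm μ f1 x = 0 := fun x =>
      le_antisymm ((hf1 x).trans hz.le) (Real.sqrt_nonneg _)
    have h1 := hoeffding_integral_ddNorm_sq hker hb' A1
    rw [← hf1def] at h1
    have h2 := hoeffding_integral_sq hker hb' A1
    have h3 : ∑ S ∈ A1, (S.card : ℝ) * ∫ x, h S x ^ 2 ∂(Measure.pi μ)
        = ∑ S ∈ A1, ∫ x, h S x ^ 2 ∂(Measure.pi μ) :=
      Finset.sum_congr rfl fun S hS => by simp [(Finset.mem_filter.1 hS).2]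
    rw [h3, ← h2] at h1
    have h4 : ∫ x, f1 x ^ 2 ∂(Measure.pi μ) = 0 := by
      rw [← h1]
      simp [hdz]
    have h5 := (integral_eq_zero_iff_of_nonneg (fun x => sq_nonneg (f1 x))
      (hf1B.pow_two.int _)).1 h4
    filter_upwards [h5] with x hx
    simpa using hx
  -- Convexity of `exp` with weights proportional to `7 * b0` and `A`.
  set B : ℝ := 7 * b0 with hB
  have hB0 : 0 ≤ B := by positivity
  have hAB : 0 < A + B := by linarith
  have hbd : ∀ {v : (∀ i, Ω i) → ℝ} (_ : BddMeas v) (c : ℝ),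
      BddMeas fun x => Real.exp (|v x| / c) := fun {v} hv c => by
    simpa only [div_eq_mul_inv] using (hv.abs.mul (BddMeas.const c⁻¹)).exp
  have hle : ∫ x, Real.exp (|f x| / (A + B)) ∂(Measure.pi μ)
      ≤ ∫ x, (B / (A + B) * Real.exp (|f1 x| / B) + A / (A + B) * Real.exp (|u x| / A))
        ∂(Measure.pi μ) := by
    refine integral_mono_ae ((hbd hfB _).int _) ((((BddMeas.const _).mul (hbd hf1B _)).add
      ((BddMeas.const _).mul (hbd huB _))).int _) ?_
    have hae : ∀ᵐ x ∂(Measure.pi μ), B = 0 → f1 x = 0 := by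
      by_cases hz : b0 = 0
      · filter_upwards [hzero hz] with x hx _ using hx
      · refine Filter.Eventually.of_forall fun x hx => absurd ?_ hz
        linarith
    filter_upwards [hae] with x hx
    have hconv := convexOn_exp.2 (Set.mem_univ (|f1 x| / B)) (Set.mem_univ (|u x| / A))
      (div_nonneg hB0 hAB.le) (div_nonneg hApos.le hAB.le)
      (by rw [← add_div, add_comm B, div_self hAB.ne'])
    simp only [smul_eq_mul] at hconv
    refine le_trans (Real.exp_le_exp.2 ?_) hconv
    have e1 : B / (A + B) * (|f1 x| / B) = |f1 x| / (A + B) := by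
      by_cases hz : B = 0
      · simp [hx hz]
      · field_simp
    have e2 : A / (A + B) * (|u x| / A) = |u x| / (A + B) := by
      field_simp
    rw [e1, e2, ← add_div, hfu]
    exact div_le_div_of_nonneg_right (abs_add_le _ _) hAB.le
  refine hle.trans ?_
  rw [integral_add (((BddMeas.const _).mul (hbd hf1B _)).int _)
    (((BddMeas.const _).mul (hbd huB _)).int _), integral_const_mul, integral_const_mul]
  have h1 := mul_le_mul_of_nonneg_left hf12 (div_nonneg hB0 hAB.le)
  have h2 := mul_le_mul_of_nonneg_left hu2 (div_nonneg hApos.le hAB.le)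
  have h3 : B / (A + B) + A / (A + B) = 1 := by
    rw [← add_div, add_comm B, div_self hAB.ne']
  nlinarith
end

section
/- Let (Ω_i, 𝒜_i, μ_i), i = 1,…,n, be probability spaces and μ = ⊗_{i=1}^n μ_i their product. Let f ∈ L¹(μ) have Hoeffding decomposition f = Σ_{d=0}^n f_d. Then for each d, 𝔏 f_d = d(d−1) f_d; that is, the d-th Hoeffding term is an eigenfunction of the discrete Laplacian 𝔏 with eigenvalue d(d−1). -/
/-!
The difference `𝔇ᵢ` fixes a kernel `h S` with `i ∈ S` (the integral vanishes by degeneracy) and kills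
it when `i ∉ S` (the kernel is constant in the `i`-th coordinate and `μᵢ` has mass one). On a sum of
kernels, `𝔇ᵢ` therefore just keeps the index sets containing `i` (`DD_sum_kernels`), so `𝔇ᵢⱼ` keeps
those containing both `i` and `j`. Summing over `i ≠ j` counts each `S` once for every off-diagonal
pair in `S × S`, that is `d(d-1)` times when `S.card = d`.
-/

open MeasureTheory

variable {n : ℕ} {Ω : Fin n → Type*} [∀ i, MeasurableSpace (Ω i)]

/-- The discrete Laplacian `𝔏 f = Σ_{i ≠ j} 𝔇ᵢⱼ f`. -/
noncomputable def Lap (μ : ∀ i, Measure (Ω i)) (f : (∀ i, Ω i) → ℝ)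
    (x : ∀ i, Ω i) : ℝ :=
  ∑ i, ∑ j, if i = j then 0 else DD μ (DD μ f j) i x

/-- On sums of kernels, `𝔇ᵢ` keeps exactly the `h S` with `i ∈ S`. -/
lemma DD_sum_kernels
    (μ : ∀ i, Measure (Ω i)) [∀ i, IsProbabilityMeasure (μ i)]
    (h : Finset (Fin n) → (∀ i, Ω i) → ℝ) (hker : IsHoeffdingKernels μ h)
    (T : Finset (Finset (Fin n))) (i : Fin n) :
    DD μ (fun y => ∑ S ∈ T, h S y) i = fun y => ∑ S ∈ T with i ∈ S, h S y := by
  funext x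
  unfold DD
  rw [integral_finsetSum _ (fun S _ => hker.integrable S i x), ← Finset.sum_sub_distrib,
    Finset.sum_filter]
  refine Finset.sum_congr rfl fun S _ => ?_
  split_ifs with hi
  · rw [hker.degenerate S i hi x, sub_zero]
  · have hconst : ∀ y, h S (Function.update x i y) = h S x := fun y =>
      hker.localized S _ _ fun k hk =>
        Function.update_of_ne (ne_of_mem_of_not_mem hk hi) _ _
    simp [hconst]

/-- A constant summed over the ordered pairs of distinct elements of `S`. -/
lemma sum_offDiag_indicator (S : Finset (Fin n)) (c : ℝ) :
    (∑ i, ∑ j, if i = j then 0 else if j ∈ S ∧ i ∈ S then c else 0)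
      = (S.card * (S.card - 1) : ℕ) * c := by
  have hoff : (∑ p ∈ S.offDiag, c) = (S.card * (S.card - 1) : ℕ) * c := by
    rw [Finset.sum_const, Finset.offDiag_card, nsmul_eq_mul, Nat.mul_sub_one]
  have hfilter : S.offDiag
      = (Finset.univ : Finset (Fin n × Fin n)).filter
          (fun p => ¬ p.1 = p.2 ∧ (p.2 ∈ S ∧ p.1 ∈ S)) := by
    ext p
    simp only [Finset.mem_offDiag, Finset.mem_filter, Finset.mem_univ, true_and]
    tauto
  rw [← hoff, hfilter, Finset.sum_filter, Fintype.sum_prod_type]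
  refine Finset.sum_congr rfl fun i _ => Finset.sum_congr rfl fun j _ => ?_
  by_cases hij : i = j <;> simp [hij]

/-- Theorem 2.3: the `d`-th Hoeffding term `f_d` of `f ∈ L¹(μ)` is an eigenfunction
of the discrete Laplacian `𝔏` with eigenvalue `d(d−1)`: `𝔏 f_d = d(d−1) f_d`. -/
theorem laplacian_diagonal_on_hoeffding
    (μ : ∀ i, Measure (Ω i)) [∀ i, IsProbabilityMeasure (μ i)]
    (f : (∀ i, Ω i) → ℝ) (hf : Integrable f (Measure.pi μ))
    (h : Finset (Fin n) → (∀ i, Ω i) → ℝ) (hker : IsHoeffdingKernels μ h)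
    (hsum : ∀ x, f x = ∑ S : Finset (Fin n), h S x)
    (d : ℕ) (x : ∀ i, Ω i) :
    Lap μ (fun y => ∑ S ∈ Finset.univ.filter (fun S : Finset (Fin n) => S.card = d), h S y) x
      = (d * (d - 1) : ℕ) *
        ∑ S ∈ Finset.univ.filter (fun S : Finset (Fin n) => S.card = d), h S x := by
  unfold Lap
  simp only [DD_sum_kernels μ h hker, Finset.filter_filter]
  have hterm : ∀ i j : Fin n,
      (if i = j then 0 else
        ∑ S : Finset (Fin n) with (S.card = d ∧ j ∈ S) ∧ i ∈ S, h S x)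
      = ∑ S : Finset (Fin n) with S.card = d,
          if i = j then 0 else if j ∈ S ∧ i ∈ S then h S x else 0 := by
    intro i j
    split_ifs
    · simp
    · rw [← Finset.sum_filter, Finset.filter_filter]
      simp only [and_assoc]
  simp only [hterm]
  simp_rw [Finset.sum_comm (t := Finset.univ.filter (fun S : Finset (Fin n) => S.card = d))]
  rw [Finset.mul_sum]
  refine Finset.sum_congr rfl fun S hS => ?_
  rw [sum_offDiag_indicator, (Finset.mem_filter.mp hS).2]
end
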